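/- arXiv:2204.09512 — 2 statements merged into one kernel-verified Lean document; each statement's English description precedes it below -/
import Mathlib

section
/- For any poset P, let Γ P denote P with the Alexandroff topology, whose open sets are exactly the upper sets of P. The following are equivalent: (1) Γ P is sober; (2) Γ P is well-filtered; (3) Γ P is a d-space; (4) P is Noetherian, i.e. every directed subset of P has a greatest element; (5) P is a dcpo in which every element is compact (x ≪ x for all x ∈ P); (6) P is a dcpo and the Alexandroff topology on P coincides with the Scott topology on P. -/
universe u v

open Set

/-- The specialization order on a topological space: `specLE x y` iff `x ∈ closure {y}`. -/
def specLE {X : Type*} [TopologicalSpace X] (x y : X) : Prop :=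
  x ∈ closure ({y} : Set X)

/-- `a` is an upper bound of `D` with respect to the specialization order. -/
def specUB {X : Type*} [TopologicalSpace X] (D : Set X) (a : X) : Prop :=
  ∀ d ∈ D, specLE d a

/-- `a` is a least upper bound of `D` with respect to the specialization order. -/
def specLUB {X : Type*} [TopologicalSpace X] (D : Set X) (a : X) : Prop :=
  specUB D a ∧ ∀ b, specUB D b → specLE a b

/-- `U` is Scott open with respect to the specialization order. -/
def ScottOpenSpec {X : Type*} [TopologicalSpace X] (U : Set X) : Prop :=
  (∀ x y, specLE x y → x ∈ U → y ∈ U) ∧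
  ∀ D : Set X, D.Nonempty → DirectedOn specLE D → ∀ a, specLUB D a → a ∈ U →
    (D ∩ U).Nonempty

/-- A d-space (monotone convergence space): a T0 space which is a dcpo in its
specialization order and in which every open set is Scott open with respect to
the specialization order. -/
def DSpace (X : Type*) [TopologicalSpace X] : Prop :=
  T0Space X ∧
  (∀ D : Set X, D.Nonempty → DirectedOn specLE D → ∃ a, specLUB D a) ∧
  (∀ U : Set X, IsOpen U → ScottOpenSpec U)

/-- A set is saturated if it is an intersection of open sets. -/
def Saturated {X : Type*} [TopologicalSpace X] (A : Set X) : Prop :=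
  ∃ 𝒰 : Set (Set X), (∀ U ∈ 𝒰, IsOpen U) ∧ A = ⋂₀ 𝒰

/-- A T0 space is well-filtered if every filtered (under reverse inclusion) family of
nonempty compact saturated sets whose intersection is contained in an open set `U`
has a member contained in `U`. -/
def WellFiltered (X : Type*) [TopologicalSpace X] : Prop :=
  T0Space X ∧
  ∀ 𝒦 : Set (Set X), 𝒦.Nonempty →
    (∀ K ∈ 𝒦, K.Nonempty ∧ IsCompact K ∧ Saturated K) →
    DirectedOn (fun A B => B ⊆ A) 𝒦 →
    ∀ U : Set X, IsOpen U → ⋂₀ 𝒦 ⊆ U → ∃ K ∈ 𝒦, K ⊆ U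

/-- A nonempty closed set which is irreducible. -/
def IrredClosed {X : Type*} [TopologicalSpace X] (A : Set X) : Prop :=
  A.Nonempty ∧ IsClosed A ∧
  ∀ F₁ F₂ : Set X, IsClosed F₁ → IsClosed F₂ → A ⊆ F₁ ∪ F₂ → (A ⊆ F₁ ∨ A ⊆ F₂)

/-- A space is sober if every irreducible closed set is the closure of a unique point. -/
def Sober (X : Type*) [TopologicalSpace X] : Prop :=
  ∀ A : Set X, IrredClosed A → ∃! x : X, A = closure ({x} : Set X)

/-- The specialization preorder on a topological space. -/
def specPreorder (Y : Type*) [TopologicalSpace Y] : Preorder Y where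
  le := specLE
  le_refl x := subset_closure rfl
  le_trans x y z hxy hyz :=
    closure_minimal (Set.singleton_subset_iff.mpr hyz) isClosed_closure hxy

/-- A Scott open subset of a poset: an upper set inaccessible by suprema of directed sets. -/
def IsScottOpen {P : Type*} [Preorder P] (U : Set P) : Prop :=
  IsUpperSet U ∧
  ∀ D : Set P, D.Nonempty → DirectedOn (· ≤ ·) D → ∀ a, IsLUB D a → a ∈ U →
    (D ∩ U).Nonempty

/-- The Scott topology on a poset. `Σ P` is `P` equipped with `scottTop P`. -/
def scottTop (P : Type*) [Preorder P] : TopologicalSpace P where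
  IsOpen := IsScottOpen
  isOpen_univ := by
    refine ⟨isUpperSet_univ, fun D hD _ _ _ _ => ?_⟩
    obtain ⟨d, hd⟩ := hD
    exact ⟨d, hd, trivial⟩
  isOpen_inter := by
    rintro U V ⟨hU1, hU2⟩ ⟨hV1, hV2⟩
    refine ⟨hU1.inter hV1, ?_⟩
    rintro D hne hdir a ha ⟨haU, haV⟩
    obtain ⟨d1, hd1D, hd1U⟩ := hU2 D hne hdir a ha haU
    obtain ⟨d2, hd2D, hd2V⟩ := hV2 D hne hdir a ha haV
    obtain ⟨d3, hd3D, h13, h23⟩ := hdir d1 hd1D d2 hd2D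
    exact ⟨d3, hd3D, hU1 h13 hd1U, hV1 h23 hd2V⟩
  isOpen_sUnion := by
    intro S hS
    refine ⟨isUpperSet_sUnion fun s hs => (hS s hs).1, ?_⟩
    rintro D hne hdir a ha ⟨U, hUS, haU⟩
    obtain ⟨d, hdD, hdU⟩ := (hS U hUS).2 D hne hdir a ha haU
    exact ⟨d, hdD, U, hUS, hdU⟩

/-- A dcpo: every nonempty directed subset has a least upper bound. -/
def IsDcpo (P : Type*) [Preorder P] : Prop :=
  ∀ D : Set P, D.Nonempty → DirectedOn (· ≤ ·) D → ∃ a, IsLUB D a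

/-- The way-below relation. -/
def wayBelow {P : Type*} [Preorder P] (x y : P) : Prop :=
  ∀ D : Set P, D.Nonempty → DirectedOn (· ≤ ·) D → ∀ a, IsLUB D a → y ≤ a →
    ∃ d ∈ D, x ≤ d

/-- A poset is Noetherian if every (nonempty) directed subset has a greatest member. -/
def Noetherian (P : Type*) [Preorder P] : Prop :=
  ∀ D : Set P, D.Nonempty → DirectedOn (· ≤ ·) D → ∃ m ∈ D, ∀ d ∈ D, d ≤ m

/-- An ideal: a (nonempty) directed lower set. -/
def IsIdealSet {P : Type*} [Preorder P] (I : Set P) : Prop :=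
  I.Nonempty ∧ DirectedOn (· ≤ ·) I ∧ IsLowerSet I

/-- The Alexandroff topology on a poset: the open sets are the upper sets. -/
def alexTop (P : Type*) [Preorder P] : TopologicalSpace P where
  IsOpen := IsUpperSet
  isOpen_univ := isUpperSet_univ
  isOpen_inter _ _ := IsUpperSet.inter
  isOpen_sUnion _ h := isUpperSet_sUnion h

/-- The space `X_⊤` obtained from `X` by adjoining a new top point `⊤` (here `none`):
the closed sets are the closed sets of `X` together with the whole space. -/
def topTop (X : Type*) [TopologicalSpace X] : TopologicalSpace (Option X) where
  IsOpen V := V = ∅ ∨ ∃ U : Set X, IsOpen U ∧ V = insert none (some '' U)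
  isOpen_univ := by
    refine Or.inr ⟨Set.univ, isOpen_univ, ?_⟩
    ext (_ | a) <;> simp
  isOpen_inter := by
    rintro V W (rfl | ⟨U₁, hU₁, rfl⟩) hW
    · exact Or.inl (by simp)
    rcases hW with rfl | ⟨U₂, hU₂, rfl⟩
    · exact Or.inl (by simp)
    · refine Or.inr ⟨U₁ ∩ U₂, hU₁.inter hU₂, ?_⟩
      ext (_ | a) <;> simp
  isOpen_sUnion := by
    classical
    intro S hS
    by_cases h0 : ⋃₀ S = ∅
    · exact Or.inl h0
    · refine Or.inr ⟨{x : X | some x ∈ ⋃₀ S}, ?_, ?_⟩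
      · have h1 : {x : X | some x ∈ ⋃₀ S} = ⋃ V ∈ S, some ⁻¹' V := by
          ext x; simp [Set.mem_sUnion]
        rw [h1]
        refine isOpen_biUnion fun V hV => ?_
        rcases hS V hV with rfl | ⟨U, hU, rfl⟩
        · rw [Set.preimage_empty]; exact isOpen_empty
        · have h2 : (some ⁻¹' (insert none (some '' U)) : Set X) = U := by
            ext x; simp
          rw [h2]; exact hU
      · have hnone : (none : Option X) ∈ ⋃₀ S := by
          obtain ⟨v, V, hVS, hvV⟩ := Set.nonempty_iff_ne_empty.mpr h0
          rcases hS V hVS with rfl | ⟨U, hU, rfl⟩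
          · exact absurd hvV (by simp)
          · exact ⟨_, hVS, by simp⟩
        ext (_ | a)
        · simp only [Set.mem_insert_iff, true_or, iff_true]
          exact hnone
        · simp [Set.mem_sUnion]

/-- A `𝐊`-set of a space `X` (relative to a class `K` of spaces): a set whose image
under any continuous map to a `𝐊`-space has the closure of a unique point as closure. -/
def IsKSet (K : (Y : Type u) → TopologicalSpace Y → Prop)
    (X : Type u) [tX : TopologicalSpace X] (A : Set X) : Prop :=
  ∀ (Y : Type u) (tY : TopologicalSpace Y), K Y tY →
    ∀ f : X → Y, @Continuous X Y tX tY f →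
      ∃! y : Y, @closure Y tY (f '' A) = @closure Y tY {y}

/-- `𝐊(X)`: the collection of closed `𝐊`-sets of `X`. -/
def KSets (K : (Y : Type u) → TopologicalSpace Y → Prop)
    (X : Type u) [TopologicalSpace X] : Set (Set X) :=
  {A : Set X | IsClosed A ∧ IsKSet K X A}

/-- The lower Vietoris topology on a family `G` of subsets of `X`, generated by the
sets `◊U = {A ∈ G | A ∩ U ≠ ∅}` for `U` open. -/
def lowerVietoris {X : Type*} [TopologicalSpace X] (G : Set (Set X)) :
    TopologicalSpace ↥G :=
  TopologicalSpace.generateFrom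
    {S : Set ↥G | ∃ U : Set X, IsOpen U ∧ S = {A : ↥G | ((A : Set X) ∩ U).Nonempty}}

/-- A class `K` of spaces is adequate if `P_H(𝐊(X))` is a `𝐊`-space for every T0 space `X`. -/
def Adequate (K : (Y : Type u) → TopologicalSpace Y → Prop) : Prop :=
  ∀ (X : Type u) (tX : TopologicalSpace X), @T0Space X tX →
    K ↥(@KSets K X tX) (@lowerVietoris X tX (@KSets K X tX))

/-- `⟨Z, η⟩` is a `𝐊`-reflection of `X`. -/
def IsKReflection (K : (Y : Type u) → TopologicalSpace Y → Prop)
    (X : Type u) (tX : TopologicalSpace X)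
    (Z : Type u) (tZ : TopologicalSpace Z) (η : X → Z) : Prop :=
  K Z tZ ∧ @Continuous X Z tX tZ η ∧
  ∀ (Y : Type u) (tY : TopologicalSpace Y), K Y tY →
    ∀ f : X → Y, @Continuous X Y tX tY f →
      ∃! g : Z → Y, @Continuous Z Y tZ tY g ∧ g ∘ η = f

/-- The carrier of the Johnstone poset `𝕁 = ℕ × (ℕ ∪ {ω})`. -/
structure Johnstone where
  fst : ℕ
  snd : WithTop ℕ

/-- The Johnstone order: `(j, k) ≤ (m, n)` iff `j = m` and `k ≤ n`, or `n = ω` and `k ≤ m`. -/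
instance : PartialOrder Johnstone where
  le p q := (p.fst = q.fst ∧ p.snd ≤ q.snd) ∨ (q.snd = ⊤ ∧ p.snd ≤ (q.fst : WithTop ℕ))
  le_refl p := Or.inl ⟨rfl, le_rfl⟩
  le_trans p q r hpq hqr := by
    rcases hpq with ⟨h1, h2⟩ | ⟨h1, h2⟩ <;> rcases hqr with ⟨h3, h4⟩ | ⟨h3, h4⟩
    · exact Or.inl ⟨h1.trans h3, h2.trans h4⟩
    · exact Or.inr ⟨h3, h2.trans h4⟩
    · have hr : r.snd = ⊤ := top_le_iff.mp (h1 ▸ h4)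
      exact Or.inr ⟨hr, h3 ▸ h2⟩
    · rw [h1] at h4
      exact absurd h4 (by simp)
  le_antisymm p q hpq hqp := by
    obtain ⟨pf, ps⟩ := p
    obtain ⟨qf, qs⟩ := q
    rcases hpq with ⟨h1, h2⟩ | ⟨h1, h2⟩ <;> rcases hqp with ⟨h3, h4⟩ | ⟨h3, h4⟩
    · dsimp at *
      cases h1
      cases le_antisymm h2 h4
      rfl
    · dsimp at *
      rw [h3] at h2
      rw [top_le_iff.mp h2] at h4
      exact absurd h4 (by simp)
    · dsimp at *
      rw [h1] at h4
      rw [top_le_iff.mp h4] at h2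
      exact absurd h2 (by simp)
    · dsimp at *
      rw [h3] at h2
      exact absurd h2 (by simp)

/-- The class of d-spaces. -/
def dClass : (Y : Type u) → TopologicalSpace Y → Prop := fun Y tY => @DSpace Y tY

/-- The class of well-filtered spaces. -/
def wfClass : (Y : Type u) → TopologicalSpace Y → Prop := fun Y tY => @WellFiltered Y tY

/-- The class of sober spaces. -/
def soberClass : (Y : Type u) → TopologicalSpace Y → Prop := fun Y tY => @Sober Y tY
theorem alex_isOpen {P : Type*} [PartialOrder P] (s : Set P) :
    @IsOpen P (alexTop P) s ↔ IsUpperSet s := Iff.rfl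

theorem alex_isClosed {P : Type*} [PartialOrder P] (s : Set P) :
    @IsClosed P (alexTop P) s ↔ IsLowerSet s := by
  letI := alexTop P
  rw [← isOpen_compl_iff, alex_isOpen, isUpperSet_compl]

theorem alex_closure {P : Type*} [PartialOrder P] (x : P) :
    @closure P (alexTop P) {x} = Iic x := by
  letI := alexTop P
  apply Subset.antisymm
  · exact closure_minimal (by simp) ((alex_isClosed _).2 (isLowerSet_Iic x))
  · intro y hy
    exact (alex_isClosed _).1 isClosed_closure hy (subset_closure rfl)

theorem alex_spec {P : Type*} [PartialOrder P] :
    @specLE P (alexTop P) = (· ≤ ·) := by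
  funext x y
  unfold specLE
  rw [alex_closure]
  rfl

theorem alex_t0 {P : Type*} [PartialOrder P] : @T0Space P (alexTop P) := by
  letI := alexTop P
  refine ⟨fun x y h => ?_⟩
  have h1 := inseparable_iff_closure_eq.1 h
  rw [alex_closure, alex_closure] at h1
  exact Iic_injective h1

theorem sober_wf {X : Type*} [TopologicalSpace X] (h0 : T0Space X) (hs : Sober X) :
    WellFiltered X := by
  refine ⟨h0, fun 𝒦 hne hK hdir U hU hsub => ?_⟩
  by_contra! hcon
  have hz := zorn_superset_nonempty
    {C : Set X | IsClosed C ∧ C ⊆ Uᶜ ∧ ∀ K ∈ 𝒦, (K ∩ C).Nonempty} ?_ Uᶜ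
    ⟨hU.isClosed_compl, Subset.rfl, fun K hk => by
      obtain ⟨x, hx, hxU⟩ := not_subset.1 (hcon K hk)
      exact ⟨x, hx, hxU⟩⟩
  · obtain ⟨C, -, ⟨hCc, hCU, hCK⟩, hmin⟩ := hz
    have hirr : IrredClosed C := by
      refine ⟨?_, hCc, fun F₁ F₂ h1 h2 hC => ?_⟩
      · obtain ⟨K, hk⟩ := hne
        exact (hCK K hk).mono inter_subset_right
      · by_contra! hF
        have key : ∀ F : Set X, IsClosed F → ¬ C ⊆ F → ∃ K ∈ 𝒦, K ∩ (C ∩ F) = ∅ := by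
          intro F hF hn
          by_contra! hh
          apply hn
          have := hmin (y := C ∩ F) ⟨hCc.inter hF, inter_subset_left.trans hCU,
            fun K hk => hh K hk⟩ inter_subset_left
          exact fun x hx => (this hx).2
        obtain ⟨K₁, hk1, e1⟩ := key F₁ h1 hF.1
        obtain ⟨K₂, hk2, e2⟩ := key F₂ h2 hF.2
        obtain ⟨K₃, hk3, s1, s2⟩ := hdir K₁ hk1 K₂ hk2
        obtain ⟨x, hx, hxC⟩ := hCK K₃ hk3
        rcases hC hxC with h | h
        · exact (e1 ▸ (⟨s1 hx, hxC, h⟩ : x ∈ K₁ ∩ (C ∩ F₁)) : x ∈ (∅ : Set X))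
        · exact (e2 ▸ (⟨s2 hx, hxC, h⟩ : x ∈ K₂ ∩ (C ∩ F₂)) : x ∈ (∅ : Set X))
    obtain ⟨x, hx, -⟩ := hs C hirr
    have hxC : x ∈ C := hx ▸ subset_closure rfl
    refine hCU hxC (hsub fun K hk => ?_)
    obtain ⟨y, hyK, hyC⟩ := hCK K hk
    obtain ⟨𝒰, hU1, hU2⟩ := (hK K hk).2.2
    rw [hU2]
    intro V hV
    rw [hx] at hyC
    obtain ⟨z, hz1, hz2⟩ := mem_closure_iff.1 hyC V (hU1 V hV) ((hU2 ▸ hyK : y ∈ ⋂₀ 𝒰) V hV)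
    rwa [← mem_singleton_iff.1 hz2]
  · intro c hc hchain hcne
    refine ⟨⋂₀ c, ⟨isClosed_sInter fun s hs => (hc hs).1, ?_, fun K hk => ?_⟩,
      fun s hs => sInter_subset_of_mem hs⟩
    · obtain ⟨s, hs⟩ := hcne
      exact (sInter_subset_of_mem hs).trans (hc hs).2.1
    · by_contra hemp
      rw [not_nonempty_iff_eq_empty, sInter_eq_iInter] at hemp
      haveI := hcne.to_subtype
      obtain ⟨s, hs⟩ := (hK K hk).2.1.elim_directed_family_closed
        (fun s : c => (s : Set X)) (fun s => (hc s.2).1) hemp (by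
          rintro ⟨s, hs⟩ ⟨t, ht⟩
          rcases hchain.total hs ht with h | h
          · exact ⟨⟨s, hs⟩, Subset.rfl, h⟩
          · exact ⟨⟨t, ht⟩, h, Subset.rfl⟩)
      exact ((hc s.2).2.2 K hk).ne_empty hs

/-- For a poset `P` with the Alexandroff topology `Γ P`, the following are
equivalent: `Γ P` is sober; `Γ P` is well-filtered; `Γ P` is a d-space; `P` is Noetherian;
`P` is a dcpo with every element compact; `P` is a dcpo whose Alexandroff topology is its
Scott topology. -/
theorem stmt18 (P : Type u) [PartialOrder P] :
    List.TFAE [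
      @Sober P (alexTop P),
      @WellFiltered P (alexTop P),
      @DSpace P (alexTop P),
      Noetherian P,
      IsDcpo P ∧ ∀ x : P, wayBelow x x,
      IsDcpo P ∧ alexTop P = scottTop P] := by
  have hdc : Noetherian P → IsDcpo P := by
    intro h D hne hD
    obtain ⟨m, hm, hm'⟩ := h D hne hD
    exact ⟨m, hm', fun b hb => hb hm⟩
  have hso : Noetherian P → ∀ U : Set P, IsUpperSet U → IsScottOpen U := by
    intro h U hU
    refine ⟨hU, fun D hne hD a ha haU => ?_⟩
    obtain ⟨m, hm, hm'⟩ := h D hne hD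
    exact ⟨m, hm, hU (ha.2 hm') haU⟩
  have hback : IsDcpo P → (∀ U : Set P, IsUpperSet U → IsScottOpen U) → Noetherian P := by
    intro h hU D hne hD
    obtain ⟨a, ha⟩ := h D hne hD
    obtain ⟨d, hd, had⟩ := (hU (Ici a) (isUpperSet_Ici a)).2 D hne hD a ha self_mem_Ici
    exact ⟨d, hd, fun e he => (ha.1 he).trans had⟩
  tfae_have 1 → 2 := @sober_wf P (alexTop P) alex_t0
  tfae_have 2 → 4 := by
    rintro ⟨-, h⟩ D hne hD
    letI := alexTop P
    obtain ⟨_, ⟨d, hd, rfl⟩, hsub⟩ := h (Ici '' D) (hne.image _) (by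
        rintro _ ⟨d, hd, rfl⟩
        refine ⟨nonempty_Ici, ?_, {Ici d}, ?_, by simp⟩
        · refine isCompact_of_finite_subcover fun {ι} V hV hc => ?_
          obtain ⟨i, hi⟩ := mem_iUnion.1 (hc self_mem_Ici)
          refine ⟨{i}, fun x hx => ?_⟩
          simpa using hV i hx hi
        · rintro U rfl
          exact isUpperSet_Ici d) (by
        rintro _ ⟨d, hd, rfl⟩ _ ⟨e, he, rfl⟩
        obtain ⟨f, hf, h1, h2⟩ := hD d hd e he
        exact ⟨_, ⟨f, hf, rfl⟩, Ici_subset_Ici.2 h1, Ici_subset_Ici.2 h2⟩)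
      (upperBounds D) (fun a b hab ha x hx => (ha hx).trans hab)
      (fun x hx d hd => hx _ ⟨d, hd, rfl⟩)
    exact ⟨d, hd, fun e he => hsub self_mem_Ici he⟩
  tfae_have 4 → 1 := by
    intro h A hA
    obtain ⟨hne, hcl, hirr⟩ := hA
    rw [alex_isClosed] at hcl
    have hdir : DirectedOn (· ≤ ·) A := by
      intro x hx y hy
      by_contra! hn
      have := hirr (Ici x)ᶜ (Ici y)ᶜ ((alex_isClosed _).2 (isUpperSet_Ici x).compl)
        ((alex_isClosed _).2 (isUpperSet_Ici y).compl) (fun z hz => by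
          by_cases hxz : x ≤ z
          · exact Or.inr (hn z hz hxz)
          · exact Or.inl hxz)
      rcases this with h | h
      · exact h hx self_mem_Ici
      · exact h hy self_mem_Ici
    obtain ⟨m, hm, hm'⟩ := h A hne hdir
    have hAm : A = Iic m := Subset.antisymm hm' (fun x hx => hcl hx hm)
    refine ⟨m, ?_, fun y hy => ?_⟩
    · simp only [alex_closure]; exact hAm
    · simp only [alex_closure] at hy
      exact Iic_injective (hy.symm.trans hAm)
  tfae_have 3 ↔ 4 := by
    have h1 : ∀ D : Set P, ∀ a, @specLUB P (alexTop P) D a ↔ IsLUB D a := by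
      intro D a
      unfold specLUB specUB
      rw [alex_spec]
      rfl
    have h2 : ∀ U : Set P, @ScottOpenSpec P (alexTop P) U ↔ IsScottOpen U := by
      intro U
      unfold ScottOpenSpec IsScottOpen
      simp only [h1, alex_spec]
      rfl
    unfold DSpace
    simp only [h1, h2, alex_spec, alex_isOpen]
    exact ⟨fun h => hback h.2.1 h.2.2, fun h => ⟨alex_t0, hdc h, hso h⟩⟩
  tfae_have 4 → 5 := fun h => ⟨hdc h, fun x D hne hD a ha hxa =>
    (hso h (Ici x) (isUpperSet_Ici x)).2 D hne hD a ha hxa⟩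
  tfae_have 5 → 4 := by
    rintro ⟨h, hc⟩
    refine hback h fun U hU => ⟨hU, fun D hne hD a ha haU => ?_⟩
    obtain ⟨d, hd, had⟩ := hc a D hne hD a ha le_rfl
    exact ⟨d, hd, hU had haU⟩
  tfae_have 4 → 6 := by
    refine fun h => ⟨hdc h, TopologicalSpace.ext ?_⟩
    funext U
    exact propext ⟨hso h U, fun h => h.1⟩
  tfae_have 6 → 4 := by
    rintro ⟨h, he⟩
    refine hback h fun U hU => ?_
    have h3 : @IsOpen P (alexTop P) U := hU
    rw [he] at h3
    exact h3
  tfae_finish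
end

section
/- For any poset P, let Γ P denote P with the Alexandroff topology (opens are the upper sets) and let Id P be the set of ideals of P (directed lower sets), ordered by inclusion. Then the map φ : Γ P → Σ(Id P), φ(x) = ↓x, is continuous, the Scott space Σ(Id P) is sober, and for every continuous map f from Γ P to a d-space Y there is a unique continuous map f* : Σ(Id P) → Y with f* ∘ φ = f. In particular, ⟨Σ(Id P), φ⟩ is simultaneously the d-reflection, the well-filtered reflection, and the sobrification of Γ P. -/
universe u v

open Set

theorem specLE_iff {X : Type*} [TopologicalSpace X] {x y : X} :
    specLE x y ↔ ∀ U : Set X, IsOpen U → x ∈ U → y ∈ U := by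
  unfold specLE
  rw [mem_closure_iff]
  constructor
  · intro h U hU hx
    obtain ⟨z, hz, rfl⟩ := h U hU hx
    exact hz
  · intro h U hU hx
    exact ⟨y, h U hU hx, rfl⟩

theorem specLE_antisymm {X : Type*} [TopologicalSpace X] (h0 : T0Space X) {x y : X}
    (h1 : specLE x y) (h2 : specLE y x) : x = y := by
  apply h0.t0
  rw [inseparable_iff_forall_isOpen]
  intro U hU
  exact ⟨specLE_iff.1 h1 U hU, specLE_iff.1 h2 U hU⟩

theorem Sober.t0 {X : Type*} [TopologicalSpace X] (h : Sober X) : T0Space X := by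
  constructor
  intro x y hxy
  have hc : closure ({x} : Set X) = closure {y} := inseparable_iff_closure_eq.1 hxy
  have hir : IrredClosed (closure ({x} : Set X)) := by
    refine ⟨⟨x, subset_closure rfl⟩, isClosed_closure, ?_⟩
    intro F₁ F₂ h1 h2 hs
    rcases hs (subset_closure rfl : x ∈ closure {x}) with hx | hx
    · exact Or.inl (closure_minimal (singleton_subset_iff.2 hx) h1)
    · exact Or.inr (closure_minimal (singleton_subset_iff.2 hx) h2)
  exact (h _ hir).unique rfl hc

theorem Sober.wf {X : Type*} [TopologicalSpace X] (h : Sober X) : WellFiltered X := by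
  refine ⟨h.t0, ?_⟩
  intro 𝒦 hne hK hdir U hU hsub
  by_contra hcon
  push Not at hcon
  let S : Set (Set X) := {A | IsClosed A ∧ A ⊆ Uᶜ ∧ ∀ K ∈ 𝒦, (K ∩ A).Nonempty}
  have hUS : Uᶜ ∈ S := by
    refine ⟨hU.isClosed_compl, Subset.rfl, fun K hk => ?_⟩
    obtain ⟨x, hx, hxU⟩ := not_subset.1 (hcon K hk)
    exact ⟨x, hx, hxU⟩
  obtain ⟨A, hA, hmin⟩ : ∃ A, Minimal (· ∈ S) A := by
    apply zorn_superset
    intro c hc hchain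
    rcases c.eq_empty_or_nonempty with rfl | hcne
    · exact ⟨Uᶜ, hUS, by simp⟩
    refine ⟨⋂₀ c, ⟨isClosed_sInter fun A hA => (hc hA).1, ?_, ?_⟩,
      fun s hs => sInter_subset_of_mem hs⟩
    · obtain ⟨a, ha⟩ := hcne
      exact (sInter_subset_of_mem ha).trans (hc ha).2.1
    · intro K hk
      by_contra hemp
      rw [not_nonempty_iff_eq_empty, sInter_eq_iInter] at hemp
      have : Nonempty c := hcne.to_subtype
      obtain ⟨i, hi⟩ := (hK K hk).2.1.elim_directed_family_closed
        (fun i : c => (i : Set X)) (fun i => (hc i.2).1) hemp (by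
          intro a b
          rcases hchain.total a.2 b.2 with h | h
          · exact ⟨a, Subset.rfl, h⟩
          · exact ⟨b, h, Subset.rfl⟩)
      exact ((hc i.2).2.2 K hk).ne_empty hi
  have hir : IrredClosed A := by
    obtain ⟨K₀, hK₀⟩ := hne
    refine ⟨(hA.2.2 K₀ hK₀).mono inter_subset_right, hA.1, ?_⟩
    intro F₁ F₂ h1 h2 hs
    by_contra hno
    push Not at hno
    have key : ∀ F : Set X, IsClosed F → ¬ A ⊆ F → ∃ K ∈ 𝒦, ¬ (K ∩ (A ∩ F)).Nonempty := by
      intro F hF hAF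
      by_contra hh
      push Not at hh
      have := hmin (y := A ∩ F) ⟨hA.1.inter hF, inter_subset_left.trans hA.2.1, hh⟩
        inter_subset_left
      exact hAF fun x hx => (this hx).2
    obtain ⟨K1, hK1, e1⟩ := key F₁ h1 hno.1
    obtain ⟨K2, hK2, e2⟩ := key F₂ h2 hno.2
    obtain ⟨K3, hK3, h31, h32⟩ := hdir K1 hK1 K2 hK2
    obtain ⟨x, hx3, hxA⟩ := hA.2.2 K3 hK3
    rcases hs hxA with hx | hx
    · exact e1 ⟨x, h31 hx3, hxA, hx⟩
    · exact e2 ⟨x, h32 hx3, hxA, hx⟩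
  obtain ⟨x, hx, -⟩ := h A hir
  have hxA : x ∈ A := hx ▸ subset_closure rfl
  refine hA.2.1 hxA (hsub ?_)
  intro K hk
  obtain ⟨y, hyK, hyA⟩ := hA.2.2 K hk
  obtain ⟨𝒰, ho, rfl⟩ := (hK K hk).2.2
  intro V hV
  rw [hx] at hyA
  exact specLE_iff.1 hyA V (ho V hV) (hyK V hV)

theorem WellFiltered.dspace {X : Type*} [TopologicalSpace X] (h : WellFiltered X) :
    DSpace X := by
  have key : ∀ D : Set X, D.Nonempty → DirectedOn specLE D →
      ∃ a, a ∈ closure D ∧ specUB D a := by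
    intro D hne hdir
    by_contra hcon
    push Not at hcon
    have htr : ∀ {x y z : X}, specLE x y → specLE y z → specLE x z :=
      fun {x y z} => (specPreorder X).le_trans x y z
    have hrf : ∀ x : X, specLE x x := (specPreorder X).le_refl
    obtain ⟨K, ⟨d, hd, rfl⟩, hKU⟩ := h.2 ((fun d => {y | specLE d y}) '' D) (hne.image _)
      (by
        rintro _ ⟨d, hd, rfl⟩
        refine ⟨⟨d, hrf d⟩, ?_, {U | IsOpen U ∧ d ∈ U}, fun U hU => hU.1, ?_⟩
        · rw [isCompact_iff_finite_subcover]
          intro ι U hU hs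
          obtain ⟨i, hi⟩ := mem_iUnion.1 (hs (hrf d))
          refine ⟨{i}, fun y hy => ?_⟩
          simpa using specLE_iff.1 hy (U i) (hU i) hi
        · ext y
          simp only [mem_setOf_eq, mem_sInter]
          rw [specLE_iff]
          exact ⟨fun h U hU => h U hU.1 hU.2, fun h U h1 h2 => h U ⟨h1, h2⟩⟩)
      (by
        rintro _ ⟨d, hd, rfl⟩ _ ⟨e, he, rfl⟩
        obtain ⟨c, hc, h1, h2⟩ := hdir d hd e he
        exact ⟨_, ⟨c, hc, rfl⟩, fun y hy => htr h1 hy, fun y hy => htr h2 hy⟩)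
      (closure D)ᶜ isClosed_closure.isOpen_compl
      (by
        intro a ha hac
        exact hcon a hac fun d hd => ha _ ⟨d, hd, rfl⟩)
    exact hKU (hrf d) (subset_closure hd)
  have lub : ∀ (D : Set X) (a : X), a ∈ closure D → specUB D a → specLUB D a := by
    intro D a ha hub
    exact ⟨hub, fun b hb => closure_minimal hb isClosed_closure ha⟩
  refine ⟨h.1, ?_, ?_⟩
  · intro D hne hdir
    obtain ⟨a, ha, hub⟩ := key D hne hdir
    exact ⟨a, lub D a ha hub⟩
  · intro U hU
    refine ⟨fun x y hxy => specLE_iff.1 hxy U hU, ?_⟩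
    intro D hne hdir a ha haU
    obtain ⟨b, hb, hub⟩ := key D hne hdir
    have hbU : b ∈ U := specLE_iff.1 (ha.2 b hub) U hU haU
    obtain ⟨d, hdU, hd⟩ := mem_closure_iff.1 hb U hU hbU
    exact ⟨d, hd, hdU⟩

section IdP
variable {P : Type u} [PartialOrder P]

abbrev IdP (P : Type u) [PartialOrder P] := ↥{I : Set P | IsIdealSet I}

theorem isIdealSet_Iic (x : P) : IsIdealSet {p : P | p ≤ x} :=
  ⟨⟨x, le_rfl⟩, fun _ ha _ hb => ⟨x, le_refl x, ha, hb⟩, fun _ _ hab ha => hab.trans ha⟩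

theorem mem_lub {D : Set (IdP P)} (hne : D.Nonempty) (hdir : DirectedOn (· ≤ ·) D)
    {a : IdP P} (ha : IsLUB D a) {x : P} (hx : x ∈ a.1) : ∃ d ∈ D, x ∈ d.1 := by
  have hid : IsIdealSet {p : P | ∃ d ∈ D, p ∈ d.1} := by
    refine ⟨?_, ?_, ?_⟩
    · obtain ⟨d, hd⟩ := hne
      obtain ⟨p, hp⟩ := d.2.1
      exact ⟨p, d, hd, hp⟩
    · rintro p ⟨d, hd, hp⟩ q ⟨e, he, hq⟩
      obtain ⟨c, hc, h1, h2⟩ := hdir d hd e he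
      obtain ⟨r, hr, h3, h4⟩ := c.2.2.1 p (h1 hp) q (h2 hq)
      exact ⟨r, ⟨c, hc, hr⟩, h3, h4⟩
    · rintro p q hqp ⟨d, hd, hp⟩
      exact ⟨d, hd, d.2.2.2 hqp hp⟩
  have hle : a ≤ ⟨_, hid⟩ := ha.2 (fun d hd p hp => ⟨d, hd, hp⟩)
  exact hle hx

theorem scottOpen_mem (x : P) : IsScottOpen {I : IdP P | x ∈ I.1} := by
  refine ⟨fun I J hIJ hI => hIJ hI, ?_⟩
  intro D hne hdir a ha hx
  obtain ⟨d, hd, hxd⟩ := mem_lub hne hdir ha hx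
  exact ⟨d, hd, hxd⟩


theorem phi_le {φ : P → IdP P}
    (hφ : ∀ x : P, (φ x : Set P) = {p : P | p ≤ x}) {x : P} {I : IdP P} : φ x ≤ I ↔ x ∈ I.1 := by
  constructor
  · intro h
    apply h
    change x ∈ (φ x).1
    rw [hφ]
    exact le_refl x
  · intro h p hp
    change p ∈ (φ x).1 at hp
    rw [hφ] at hp
    exact I.2.2.2 hp h

theorem phi_mono {φ : P → IdP P}
    (hφ : ∀ x : P, (φ x : Set P) = {p : P | p ≤ x}) {x y : P} (h : x ≤ y) : φ x ≤ φ y := by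
  rw [phi_le hφ, hφ]
  exact h

theorem exists_phi {φ : P → IdP P}
    (hφ : ∀ x : P, (φ x : Set P) = {p : P | p ≤ x}) {U : Set (IdP P)} (hU : IsScottOpen U) {I : IdP P} (hI : I ∈ U) :
    ∃ x ∈ I.1, φ x ∈ U := by
  obtain ⟨_, ⟨x, hx, rfl⟩, h⟩ := hU.2 (φ '' I.1) (I.2.1.image _) (by
      rintro _ ⟨x, hx, rfl⟩ _ ⟨y, hy, rfl⟩
      obtain ⟨z, hz, h1, h2⟩ := I.2.2.1 x hx y hy
      exact ⟨_, ⟨z, hz, rfl⟩, phi_mono hφ h1, phi_mono hφ h2⟩) I (by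
      constructor
      · rintro _ ⟨x, hx, rfl⟩
        exact (phi_le hφ).2 hx
      · intro J hJ x hx
        exact (phi_le hφ).1 (hJ ⟨x, hx, rfl⟩)) hI
  exact ⟨x, hx, h⟩

theorem phi_cont {φ : P → IdP P}
    (hφ : ∀ x : P, (φ x : Set P) = {p : P | p ≤ x}) : @Continuous P (IdP P) (alexTop P) (scottTop (IdP P)) φ := by
  refine (@continuous_def _ _ (alexTop P) (scottTop (IdP P)) φ).2 ?_
  intro U hU x y hxy hx
  exact hU.1 (phi_mono hφ hxy) hx

theorem specLE_scott {φ : P → IdP P}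
    (hφ : ∀ x : P, (φ x : Set P) = {p : P | p ≤ x}) {I J : IdP P} : @specLE _ (scottTop (IdP P)) I J ↔ I ≤ J := by
  rw [@specLE_iff _ (scottTop (IdP P))]
  constructor
  · intro h x hx
    exact h _ (scottOpen_mem x) hx
  · intro h U hU hI
    exact hU.1 h hI

theorem sober_scott {φ : P → IdP P}
    (hφ : ∀ x : P, (φ x : Set P) = {p : P | p ≤ x}) : @Sober (IdP P) (scottTop (IdP P)) := by
  letI : TopologicalSpace (IdP P) := scottTop (IdP P)
  rintro A ⟨hne, hcl, hir⟩
  have hop : IsScottOpen Aᶜ := hcl.isOpen_compl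
  have hlow : ∀ {I J : IdP P}, I ≤ J → J ∈ A → I ∈ A := by
    intro I J hIJ hJ
    by_contra hI
    exact hop.1 hIJ hI hJ
  have hid : IsIdealSet {x : P | φ x ∈ A} := by
    refine ⟨?_, ?_, ?_⟩
    · obtain ⟨J, hJ⟩ := hne
      obtain ⟨x, hx⟩ := J.2.1
      exact ⟨x, hlow ((phi_le hφ).2 hx) hJ⟩
    · intro x hx y hy
      have : ∃ J ∈ A, x ∈ J.1 ∧ y ∈ J.1 := by
        by_contra hcon
        push Not at hcon
        have c : ∀ z : P, IsClosed {I : IdP P | z ∈ I.1}ᶜ := fun z =>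
          isClosed_compl_iff.2 (scottOpen_mem z)
        rcases hir _ _ (c x) (c y) (by
          intro J hJ
          by_cases h : x ∈ J.1
          · exact Or.inr (hcon J hJ h)
          · exact Or.inl h) with h | h
        · exact h hx ((phi_le hφ).1 le_rfl)
        · exact h hy ((phi_le hφ).1 le_rfl)
      obtain ⟨J, hJ, hxJ, hyJ⟩ := this
      obtain ⟨z, hz, h1, h2⟩ := J.2.2.1 x hxJ y hyJ
      exact ⟨z, hlow ((phi_le hφ).2 hz) hJ, h1, h2⟩
    · intro x y hyx hx
      exact hlow (phi_mono hφ hyx) hx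
  have hIA : (⟨_, hid⟩ : IdP P) ∈ A := by
    by_contra hI
    obtain ⟨x, hx, hxA⟩ := exists_phi hφ hop hI
    exact hxA hx
  have hAeq : A = closure {(⟨_, hid⟩ : IdP P)} := by
    apply Subset.antisymm
    · intro J hJ
      refine (specLE_scott hφ).2 ?_
      intro x hx
      exact hlow ((phi_le hφ).2 hx) hJ
    · exact closure_minimal (singleton_subset_iff.2 hIA) hcl
  refine ⟨_, hAeq, ?_⟩
  intro J hJ
  apply le_antisymm
  · refine (specLE_scott hφ).1 ?_
    change J ∈ closure _
    rw [← hAeq, hJ]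
    exact subset_closure rfl
  · refine (specLE_scott hφ).1 ?_
    change _ ∈ closure _
    rw [← hJ]
    exact hIA

theorem ext_dspace {φ : P → IdP P}
    (hφ : ∀ x : P, (φ x : Set P) = {p : P | p ≤ x}) (Y : Type u) (tY : TopologicalSpace Y) (hY : @DSpace Y tY) (f : P → Y)
    (hf : @Continuous P Y (alexTop P) tY f) :
    ∃! g : IdP P → Y, @Continuous (IdP P) Y (scottTop (IdP P)) tY g ∧ g ∘ φ = f := by
  have hfm : ∀ {x y : P}, x ≤ y → specLE (f x) (f y) := by
    intro x y hxy
    rw [specLE_iff]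
    intro U hU hx
    exact ((@continuous_def _ _ (alexTop P) tY f).1 hf U hU : IsUpperSet (f ⁻¹' U)) hxy hx
  have hdir : ∀ I : IdP P, DirectedOn specLE (f '' I.1) := by
    rintro I _ ⟨x, hx, rfl⟩ _ ⟨y, hy, rfl⟩
    obtain ⟨z, hz, h1, h2⟩ := I.2.2.1 x hx y hy
    exact ⟨_, ⟨z, hz, rfl⟩, hfm h1, hfm h2⟩
  choose g hg using fun I : IdP P => hY.2.1 (f '' I.1) (I.2.1.image _) (hdir I)
  have huniq : ∀ {D : Set Y} {a b : Y}, specLUB D a → specLUB D b → a = b :=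
    fun ha hb => specLE_antisymm hY.1 (ha.2 _ hb.1) (hb.2 _ ha.1)
  refine ⟨g, ⟨?_, ?_⟩, ?_⟩
  · refine (@continuous_def _ _ (scottTop (IdP P)) tY g).2 ?_
    intro U hU
    have hUS := hY.2.2 U hU
    refine ⟨?_, ?_⟩
    · intro I J hIJ hI
      refine hUS.1 _ _ ((hg I).2 _ ?_) hI
      rintro _ ⟨x, hx, rfl⟩
      exact (hg J).1 _ ⟨x, hIJ hx, rfl⟩
    · intro D hne hD a ha haU
      obtain ⟨_, ⟨x, hx, rfl⟩, hxU⟩ := hUS.2 _ (a.2.1.image _) (hdir a) _ (hg a) haU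
      obtain ⟨d, hd, hxd⟩ := mem_lub hne hD ha hx
      exact ⟨d, hd, hUS.1 _ _ ((hg d).1 _ ⟨x, hxd, rfl⟩) hxU⟩
  · funext x
    refine huniq (hg (φ x)) ⟨?_, ?_⟩
    · rintro _ ⟨y, hy, rfl⟩
      rw [hφ] at hy
      exact hfm hy
    · intro b hb
      exact hb _ ⟨x, (phi_le hφ).1 le_rfl, rfl⟩
  · rintro k ⟨hk, hkφ⟩
    funext I
    have hko : ∀ U : Set Y, IsOpen U → IsScottOpen (k ⁻¹' U) :=
      (@continuous_def _ _ (scottTop (IdP P)) tY k).1 hk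
    have hkx : ∀ x, k (φ x) = f x := fun x => congrFun hkφ x
    refine huniq (D := f '' I.1) ⟨?_, ?_⟩ (hg I)
    · rintro _ ⟨x, hx, rfl⟩
      rw [specLE_iff]
      intro U hU hxU
      refine (hko U hU).1 ((phi_le hφ).2 hx) ?_
      change k (φ x) ∈ U
      rw [hkx]
      exact hxU
    · intro b hb
      rw [specLE_iff]
      intro U hU hIU
      obtain ⟨x, hx, hxU⟩ := exists_phi hφ (hko U hU) hIU
      change k (φ x) ∈ U at hxU
      rw [hkx] at hxU
      exact specLE_iff.1 (hb _ ⟨x, hx, rfl⟩) U hU hxU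

end IdP

/-- For any poset `P`, the map `φ : Γ P → Σ (Id P)`, `φ x = ↓x`, is
continuous, `Σ (Id P)` is sober, and every continuous map from `Γ P` to a d-space factors
uniquely continuously through `φ`; `⟨Σ (Id P), φ⟩` is simultaneously the d-reflection,
the well-filtered reflection, and the sobrification of `Γ P`. -/
theorem stmt19 (P : Type u) [PartialOrder P] :
    (∀ x : P, {p : P | p ≤ x} ∈ {I : Set P | IsIdealSet I}) ∧
    ∀ φ : P → ↥{I : Set P | IsIdealSet I},
      (∀ x : P, (φ x : Set P) = {p : P | p ≤ x}) →
      @Continuous P ↥{I : Set P | IsIdealSet I} (alexTop P)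
        (scottTop ↥{I : Set P | IsIdealSet I}) φ ∧
      @Sober ↥{I : Set P | IsIdealSet I} (scottTop ↥{I : Set P | IsIdealSet I}) ∧
      (∀ (Y : Type u) (tY : TopologicalSpace Y), @DSpace Y tY →
        ∀ f : P → Y, @Continuous P Y (alexTop P) tY f →
          ∃! g : ↥{I : Set P | IsIdealSet I} → Y,
            @Continuous ↥{I : Set P | IsIdealSet I} Y
              (scottTop ↥{I : Set P | IsIdealSet I}) tY g ∧ g ∘ φ = f) ∧
      IsKReflection dClass P (alexTop P) ↥{I : Set P | IsIdealSet I}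
        (scottTop ↥{I : Set P | IsIdealSet I}) φ ∧
      IsKReflection wfClass P (alexTop P) ↥{I : Set P | IsIdealSet I}
        (scottTop ↥{I : Set P | IsIdealSet I}) φ ∧
      IsKReflection soberClass P (alexTop P) ↥{I : Set P | IsIdealSet I}
        (scottTop ↥{I : Set P | IsIdealSet I}) φ := by
  refine ⟨isIdealSet_Iic, fun φ hφ => ?_⟩
  have hs := sober_scott hφ
  have hw := @Sober.wf _ (scottTop _) hs
  have hd := @WellFiltered.dspace _ (scottTop _) hw
  have hc := phi_cont hφ
  refine ⟨hc, hs, ext_dspace hφ, ⟨hd, hc, ext_dspace hφ⟩, ⟨hw, hc, ?_⟩, ⟨hs, hc, ?_⟩⟩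
  · intro Y tY hY
    exact ext_dspace hφ Y tY (WellFiltered.dspace hY)
  · intro Y tY hY
    exact ext_dspace hφ Y tY (WellFiltered.dspace (Sober.wf hY))
end
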